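/- For every λ_NRC type A, every variable x : A is reducible. -/

import Mathlib

/-!
A variable `x` is neutral: it never forms a redex with the frame above it. Hence every reduct of
`S[x]` has the form `S'[x]`, where `S'` arises from `S` by a step that does not look at the content
of the hole: either a reduction inside a frame, or the fusion of a comprehension or conditional
frame with the frame above it by a commuting conversion. This gives a reduction relation
`StackStep` on frame stacks, with two properties:

* `StackStep S S'` implies `S[M] ↝ S'[M]` for *every* term `M` (`StackStep.plugS`), so if `S[M]`
  is c-SN for a single `M`, then `S` terminates (`StackSN.of_csn`);
* every reduct of `S[x]` comes from a stack step (`plugS_var_step`), so if `S` terminates, then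
  `S[x]` is c-SN (`StackSN.csn_var`).

It remains to see that reducible stacks terminate (`RedS.stackSN`), by induction on the type.
The stack `Id` has no steps, and at `Int` and
`String` no other stack is reducible. At `Bool` the definition says that `S[true]` is c-SN. At `Bag B` the
induction hypothesis makes variables of type `B` reducible, so `S[[x]]` is c-SN. An application or
projection frame does not fuse with the frame above it, so at function and record types a step
takes place either inside the argument, which is c-SN, or in the rest of the stack, which
terminates by the induction hypothesis.
-/

/-! ### Terms, reduction and reducibility -/

namespace NRC

inductive BTy | int | bool | string
deriving DecidableEq

inductive BVal
| int : Int → BVal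
| bool : Bool → BVal
| str : String → BVal
deriving DecidableEq

inductive Ty
| base : BTy → Ty
| record : List (String × Ty) → Ty
| bag : Ty → Ty
| fn : Ty → Ty → Ty

inductive Tm
| var : Nat → Tm
| cst : String → List Tm → Tm
| boolLit : Bool → Tm
| table : String → Tm
| ite : Tm → Tm → Tm → Tm
| lam : Ty → Tm → Tm
| app : Tm → Tm → Tm
| rcd : List (String × Tm) → Tm
| proj : Tm → String → Tm
| isEmpty : Tm → Tm
| emp : Tm
| sng : Tm → Tm
| union : Tm → Tm → Tm
| for_ : Tm → Tm → Tm

namespace Tm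

def upRen (f : Nat → Nat) : Nat → Nat
| 0 => 0
| n+1 => f n + 1

def rename (f : Nat → Nat) : Tm → Tm
| .var n => .var (f n)
| .cst c ms => .cst c (ms.attach.map fun m => rename f m.1)
| .boolLit b => .boolLit b
| .table t => .table t
| .ite a b c => .ite (rename f a) (rename f b) (rename f c)
| .lam A m => .lam A (rename (upRen f) m)
| .app a b => .app (rename f a) (rename f b)
| .rcd fs => .rcd (fs.attach.map fun p => (p.1.1, rename f p.1.2))
| .proj m ℓ => .proj (rename f m) ℓ
| .isEmpty m => .isEmpty (rename f m)
| .emp => .emp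
| .sng m => .sng (rename f m)
| .union a b => .union (rename f a) (rename f b)
| .for_ a b => .for_ (rename f a) (rename (upRen f) b)
decreasing_by
  all_goals simp_wf
  all_goals first
    | (have := List.sizeOf_lt_of_mem m.2; omega)
    | (obtain ⟨⟨l,t⟩, hm⟩ := p; have := List.sizeOf_lt_of_mem hm; simp at this ⊢; omega)
    | omega

/-- shift all free variables up by one -/
def shift (M : Tm) : Tm := rename Nat.succ M

def upSub (σ : Nat → Tm) : Nat → Tm
| 0 => .var 0
| n+1 => shift (σ n)

/-- simultaneous (capture-avoiding, de Bruijn) substitution -/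
def subst (σ : Nat → Tm) : Tm → Tm
| .var n => σ n
| .cst c ms => .cst c (ms.attach.map fun m => subst σ m.1)
| .boolLit b => .boolLit b
| .table t => .table t
| .ite a b c => .ite (subst σ a) (subst σ b) (subst σ c)
| .lam A m => .lam A (subst (upSub σ) m)
| .app a b => .app (subst σ a) (subst σ b)
| .rcd fs => .rcd (fs.attach.map fun p => (p.1.1, subst σ p.1.2))
| .proj m ℓ => .proj (subst σ m) ℓ
| .isEmpty m => .isEmpty (subst σ m)
| .emp => .emp
| .sng m => .sng (subst σ m)
| .union a b => .union (subst σ a) (subst σ b)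
| .for_ a b => .for_ (subst σ a) (subst (upSub σ) b)
decreasing_by
  all_goals simp_wf
  all_goals first
    | (have := List.sizeOf_lt_of_mem m.2; omega)
    | (obtain ⟨⟨l,t⟩, hm⟩ := p; have := List.sizeOf_lt_of_mem hm; simp at this ⊢; omega)
    | omega

/-- substitution of a single term for variable 0: `M[x := N]` -/
def subst0 (M N : Tm) : Tm :=
  subst (fun n => match n with | 0 => N | n+1 => .var n) M

end Tm

/-- Elimination frames E[] ::= [] M | [].ℓ | if [] then M else N | for (x ← []) N -/
inductive Frame
| appF : Tm → Frame
| projF : String → Frame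
| iteF : Tm → Tm → Frame
| forF : Tm → Frame

namespace Frame

def plug : Frame → Tm → Tm
| .appF N, M => .app M N
| .projF ℓ, M => .proj M ℓ
| .iteF a b, M => .ite M a b
| .forF N, M => .for_ M N

/-- shift the terms occurring in a frame (used when a frame is pushed under
    the binder of a comprehension) -/
def shift : Frame → Frame
| .appF N => .appF N.shift
| .projF ℓ => .projF ℓ
| .iteF a b => .iteF a.shift b.shift
| .forF N => .forF (N.rename (Tm.upRen Nat.succ))

end Frame

/-- The rewrite relation ↝_c : β-rules, commuting conversions, and closure
    under arbitrary contexts. -/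
inductive StepC : Tm → Tm → Prop
-- β-rules
| beta {A M N} : StepC (.app (.lam A M) N) (M.subst0 N)
| projRcd {fs : List (String × Tm)} {ℓ M} : (ℓ, M) ∈ fs → StepC (.proj (.rcd fs) ℓ) M
| iteTrue {M N} : StepC (.ite (.boolLit true) M N) M
| iteFalse {M N} : StepC (.ite (.boolLit false) M N) N
| forSng {M N} : StepC (.for_ (.sng M) N) (N.subst0 M)
-- commuting conversions
| ccFor (E : Frame) {M N} : StepC (E.plug (.for_ M N)) (.for_ M (E.shift.plug N))
| ccIte (E : Frame) {L M N} : StepC (E.plug (.ite L M N)) (.ite L (E.plug M) (E.plug N))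
| ccEmp (E : Frame) : StepC (E.plug .emp) .emp
| ccUnion (E : Frame) {M N} : StepC (E.plug (.union M N)) (.union (E.plug M) (E.plug N))
-- congruence: closure under all contexts
| congCst {c ms₁ ms₂ m m'} : StepC m m' → StepC (.cst c (ms₁ ++ m :: ms₂)) (.cst c (ms₁ ++ m' :: ms₂))
| congIte₁ {a a' b c} : StepC a a' → StepC (.ite a b c) (.ite a' b c)
| congIte₂ {a b b' c} : StepC b b' → StepC (.ite a b c) (.ite a b' c)
| congIte₃ {a b c c'} : StepC c c' → StepC (.ite a b c) (.ite a b c')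
| congLam {A m m'} : StepC m m' → StepC (.lam A m) (.lam A m')
| congApp₁ {a a' b} : StepC a a' → StepC (.app a b) (.app a' b)
| congApp₂ {a b b'} : StepC b b' → StepC (.app a b) (.app a b')
| congRcd {fs₁ fs₂ : List (String × Tm)} {ℓ m m'} :
    StepC m m' → StepC (.rcd (fs₁ ++ (ℓ, m) :: fs₂)) (.rcd (fs₁ ++ (ℓ, m') :: fs₂))
| congProj {m m' ℓ} : StepC m m' → StepC (.proj m ℓ) (.proj m' ℓ)
| congIsEmpty {m m'} : StepC m m' → StepC (.isEmpty m) (.isEmpty m')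
| congSng {m m'} : StepC m m' → StepC (.sng m) (.sng m')
| congUnion₁ {a a' b} : StepC a a' → StepC (.union a b) (.union a' b)
| congUnion₂ {a b b'} : StepC b b' → StepC (.union a b) (.union a b')
| congFor₁ {a a' b} : StepC a a' → StepC (.for_ a b) (.for_ a' b)
| congFor₂ {a b b'} : StepC b b' → StepC (.for_ a b) (.for_ a b')

/-- A term is c-strongly-normalising if all ↝_c-reduction sequences from it
    are finite, i.e. it is accessible for the converse of ↝_c. -/
def CSN (M : Tm) : Prop := Acc (fun a b => StepC b a) M

/-- table signature: each table has a flat relation type -/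
abbrev TSig := String → Option (List (String × BTy))
/-- constant signature: first-order, over base types -/
abbrev CSig := String → Option (List BTy × BTy)

/-- Typing judgement Γ ⊢ M : A -/
inductive Typing (tsig : TSig) (csig : CSig) : List Ty → Tm → Ty → Prop
| var {Γ n A} : Γ[n]? = some A → Typing tsig csig Γ (.var n) A
| cst {Γ c Ms Os O} : csig c = some (Os, O) → Ms.length = Os.length →
    (∀ p ∈ Ms.zip Os, Typing tsig csig Γ p.1 (.base p.2)) →
    Typing tsig csig Γ (.cst c Ms) (.base O)
| boolLit {Γ b} : Typing tsig csig Γ (.boolLit b) (.base .bool)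
| table {Γ t fts} : tsig t = some fts →
    Typing tsig csig Γ (.table t) (.bag (.record (fts.map fun p => (p.1, Ty.base p.2))))
| ite {Γ L M N A} : Typing tsig csig Γ L (.base .bool) → Typing tsig csig Γ M A →
    Typing tsig csig Γ N A → Typing tsig csig Γ (.ite L M N) A
| lam {Γ A B M} : Typing tsig csig (A :: Γ) M B → Typing tsig csig Γ (.lam A M) (.fn A B)
| app {Γ A B M N} : Typing tsig csig Γ M (.fn A B) → Typing tsig csig Γ N A →
    Typing tsig csig Γ (.app M N) B
| rcd {Γ} {fs : List (String × Tm)} {fts : List (String × Ty)} : fs.length = fts.length →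
    (∀ p ∈ fs.zip fts, p.1.1 = p.2.1) →
    (∀ p ∈ fs.zip fts, Typing tsig csig Γ p.1.2 p.2.2) →
    Typing tsig csig Γ (.rcd fs) (.record fts)
| proj {Γ M fts ℓ A} : Typing tsig csig Γ M (.record fts) → (ℓ, A) ∈ fts →
    Typing tsig csig Γ (.proj M ℓ) A
| isEmpty {Γ M A} : Typing tsig csig Γ M (.bag A) →
    Typing tsig csig Γ (.isEmpty M) (.base .bool)
| emp {Γ A} : Typing tsig csig Γ .emp (.bag A)
| sng {Γ M A} : Typing tsig csig Γ M A → Typing tsig csig Γ (.sng M) (.bag A)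
| union {Γ M N A} : Typing tsig csig Γ M (.bag A) → Typing tsig csig Γ N (.bag A) →
    Typing tsig csig Γ (.union M N) (.bag A)
| for_ {Γ M N A B} : Typing tsig csig Γ M (.bag A) → Typing tsig csig (A :: Γ) N (.bag B) →
    Typing tsig csig Γ (.for_ M N) (.bag B)

end NRC

namespace NRC

/-- Frame stacks S ::= Id | S ∘ E, represented as lists of frames
    (innermost frame first; `Id` is `[]`, `S ∘ E` is `E :: S`). -/
abbrev Stack := List Frame

/-- Plugging: `Id[M] = M`, `(S ∘ E)[M] = S[E[M]]`. -/
def plugS : Stack → Tm → Tm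
| [], M => M
| E :: S, M => plugS S (E.plug M)

/-- Reducibility of frame stacks (at a type), defined by recursion on the type:
    * Id is reducible;
    * S ∘ ([] N) : (A → B) ⊸ C is reducible if S and N are reducible;
    * S ∘ ([].ℓ) : ⟨ℓ̄:Ā⟩ ⊸ C is reducible if S is reducible;
    * S : Bag A ⊸ C is reducible if S[[M]] is c-SN for all reducible M : A;
    * S : Bool ⊸ C is reducible if S[true] and S[false] are c-SN. -/
def RedS : Ty → Stack → Prop
  | _, [] => True
  | .bag B, S => ∀ M : Tm, (∀ S' : Stack, RedS B S' → CSN (plugS S' M)) → CSN (plugS S (.sng M))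
  | .base .bool, S => CSN (plugS S (.boolLit true)) ∧ CSN (plugS S (.boolLit false))
  | .fn A B, (.appF N) :: S =>
      RedS B S ∧ (∀ S' : Stack, RedS A S' → CSN (plugS S' N))
  | .record fts, (.projF ℓ) :: S => ∃ A : {A : Ty // (ℓ, A) ∈ fts}, RedS A.1 S
  | _, _ => False
termination_by A _ => sizeOf A
decreasing_by
  all_goals simp_wf
  all_goals first
    | omega
    | (have h1 := List.sizeOf_lt_of_mem A.2; simp at h1 ⊢; omega)

/-- A term M : A is reducible if S[M] is c-SN for every reducible S : A ⊸ C. -/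
def RedT (A : Ty) (M : Tm) : Prop := ∀ S : Stack, RedS A S → CSN (plugS S M)

end NRC

namespace NRC

/-! ### Reduction of frame stacks -/

/-- One `↝_c`-step inside a term occurring in a frame. -/
inductive FrameStep : Frame → Frame → Prop
| app {N N'} : StepC N N' → FrameStep (.appF N) (.appF N')
| ite₁ {a a' b} : StepC a a' → FrameStep (.iteF a b) (.iteF a' b)
| ite₂ {a b b'} : StepC b b' → FrameStep (.iteF a b) (.iteF a b')
| for_ {N N'} : StepC N N' → FrameStep (.forF N) (.forF N')

/-- Reduction of frame stacks, independent of the content of the hole: a step inside some frame, or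
a commuting conversion between two adjacent frames (the head of the list is the innermost
frame). The `∅` and `⊎` conversions need a constructor in the hole, so they do not appear. -/
inductive StackStep : Stack → Stack → Prop
| head {E E' S} : FrameStep E E' → StackStep (E :: S) (E' :: S)
| tail {E S S'} : StackStep S S' → StackStep (E :: S) (E :: S')
| commFor {N E S} : StackStep (.forF N :: E :: S) (.forF (E.shift.plug N) :: S)
| commIte {a b E S} : StackStep (.iteF a b :: E :: S) (.iteF (E.plug a) (E.plug b) :: S)

/-- A stack is strongly normalising if every sequence of stack steps from it is finite. -/
def StackSN (S : Stack) : Prop := Acc (fun a b => StackStep b a) S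

theorem StepC.plug {M M' : Tm} (E : Frame) (h : StepC M M') : StepC (E.plug M) (E.plug M') := by
  cases E with
  | appF N => exact .congApp₁ h
  | projF l => exact .congProj h
  | iteF a b => exact .congIte₁ h
  | forF N => exact .congFor₁ h

theorem StepC.plugS {M M' : Tm} (S : Stack) (h : StepC M M') :
    StepC (plugS S M) (plugS S M') := by
  induction S generalizing M M' with
  | nil => exact h
  | cons E S ih => exact ih (h.plug E)

theorem FrameStep.plug {E E' : Frame} (h : FrameStep E E') (M : Tm) :
    StepC (E.plug M) (E'.plug M) := by
  cases h with
  | app h => exact .congApp₂ h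
  | ite₁ h => exact .congIte₂ h
  | ite₂ h => exact .congIte₃ h
  | for_ h => exact .congFor₂ h

theorem StackStep.plugS {S S' : Stack} (h : StackStep S S') (M : Tm) :
    StepC (plugS S M) (plugS S' M) := by
  induction h generalizing M with
  | head h => exact (h.plug M).plugS _
  | tail _ ih => exact ih _
  | @commFor N E S => exact (StepC.ccFor E).plugS S
  | @commIte a b E S => exact (StepC.ccIte E).plugS S

theorem StackSN.of_csn {M : Tm} {S : Stack} (h : CSN (plugS S M)) : StackSN S := by
  generalize hT : plugS S M = T at h
  induction h generalizing S with
  | intro T _ ih =>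
    subst hT
    exact ⟨_, fun S' hS => ih _ (hS.plugS M) rfl⟩

theorem plugS_append (S T : Stack) (M : Tm) : plugS (S ++ T) M = plugS T (plugS S M) := by
  induction S generalizing M with
  | nil => rfl
  | cons E S ih => exact ih _

theorem StackStep.append_left {T T' : Stack} (S : Stack) (h : StackStep T T') :
    StackStep (S ++ T) (S ++ T') := by
  induction S with
  | nil => exact h
  | cons E S ih => exact .tail ih

theorem StackStep.append_right {S S' : Stack} (T : Stack) (h : StackStep S S') :
    StackStep (S ++ T) (S' ++ T) := by
  induction h with
  | head h => exact .head h
  | tail _ ih => exact .tail ih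
  | commFor => exact .commFor
  | commIte => exact .commIte

/-! ### Reducts of a variable in a frame stack -/

/-- `S[x]` is either `x` itself or an elimination form, given by the outermost frame of `S`. -/
theorem plugS_var_shape (S : Stack) (n : Nat) :
    plugS S (.var n) = .var n ∨
      ∃ S₀ E, S = S₀ ++ [E] ∧ plugS S (.var n) = E.plug (plugS S₀ (.var n)) := by
  rcases List.eq_nil_or_concat S with rfl | ⟨S₀, E, rfl⟩
  · exact .inl rfl
  · exact .inr ⟨S₀, E, by simp, by simp [plugS_append, plugS]⟩

/-- No `β`-step, and no commuting conversion other than those for `for` and `if`, applies at the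
outermost frame of `E[S[x]]`. -/
theorem plug_var_step {E : Frame} {S : Stack} {n : Nat} {P : Tm}
    (h : StepC (E.plug (plugS S (.var n))) P) :
    (∃ Q, StepC (plugS S (.var n)) Q ∧ P = E.plug Q) ∨
    (∃ E', FrameStep E E' ∧ P = E'.plug (plugS S (.var n))) ∨
    (∃ M N, plugS S (.var n) = .for_ M N ∧ P = .for_ M (E.shift.plug N)) ∨
    (∃ L M N, plugS S (.var n) = .ite L M N ∧ P = .ite L (E.plug M) (E.plug N)) := by
  have shape : ∀ T, plugS S (.var n) = T → (T = .var n ∨ ∃ (E : Frame) (R : Tm), T = E.plug R) := by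
    rintro T rfl
    rcases plugS_var_shape S n with h | ⟨S₀, E, -, h⟩
    · exact .inl h
    · exact .inr ⟨E, _, h⟩
  generalize plugS S (.var n) = T at h shape
  have shape := shape T rfl
  generalize hX : E.plug T = X at h
  -- A hole filled by a constructor contradicts `shape`; commuting conversions and congruences
  -- match one of the four alternatives.
  cases h with
  | beta | projRcd | iteTrue | iteFalse | forSng =>
    exfalso
    cases E <;> simp [Frame.plug] at hX
    all_goals
      obtain ⟨rfl, _⟩ := hX
      rcases shape with h | ⟨E, R, h⟩
      · cases h
      · cases E <;> cases h
  | ccEmp E' | ccUnion E' =>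
    exfalso
    cases E <;> cases E' <;> simp [Frame.plug] at hX
    all_goals
      obtain ⟨rfl, _⟩ := hX
      rcases shape with h | ⟨E, R, h⟩
      · cases h
      · cases E <;> cases h
  | ccFor E' =>
    refine .inr (.inr (.inl ?_))
    cases E <;> cases E' <;> cases hX <;> exact ⟨_, _, rfl, rfl⟩
  | ccIte E' =>
    refine .inr (.inr (.inr ?_))
    cases E <;> cases E' <;> cases hX <;> exact ⟨_, _, _, rfl, rfl⟩
  | congIte₁ h | congApp₁ h | congProj h | congFor₁ h =>
    cases E <;> cases hX
    exact .inl ⟨_, h, rfl⟩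
  | congIte₂ h => cases E <;> cases hX; exact .inr (.inl ⟨_, .ite₁ h, rfl⟩)
  | congIte₃ h => cases E <;> cases hX; exact .inr (.inl ⟨_, .ite₂ h, rfl⟩)
  | congApp₂ h => cases E <;> cases hX; exact .inr (.inl ⟨_, .app h, rfl⟩)
  | congFor₂ h => cases E <;> cases hX; exact .inr (.inl ⟨_, .for_ h, rfl⟩)
  | congCst | congLam | congRcd | congIsEmpty | congSng | congUnion₁ | congUnion₂ =>
    cases E <;> cases hX

/-- Every reduct of `S[x]` is obtained by a step of the stack `S`. -/
theorem plugS_var_step {S : Stack} {n : Nat} {P : Tm} (h : StepC (plugS S (.var n)) P) :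
    ∃ S', StackStep S S' ∧ P = plugS S' (.var n) := by
  -- Reverse induction, because the root of `S[x]` is the outermost frame, the last in the list.
  induction S using List.reverseRecOn generalizing P with
  | nil =>
    generalize hX : plugS [] (.var n) = X at h
    cases h with
    | ccFor E | ccIte E | ccEmp E | ccUnion E => cases E <;> cases hX
    | _ => cases hX
  | append_singleton S E ih =>
    rw [plugS_append] at h
    rcases plug_var_step h with ⟨Q, hQ, rfl⟩ | ⟨E', hE, rfl⟩ | ⟨M, N, hM, rfl⟩ |
      ⟨L, M, N, hM, rfl⟩
    · obtain ⟨S', hS, rfl⟩ := ih hQ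
      exact ⟨S' ++ [E], hS.append_right _, by simp [plugS_append, plugS]⟩
    · exact ⟨S ++ [E'], .append_left _ (.head hE), by simp [plugS_append, plugS]⟩
    · rcases plugS_var_shape S n with h' | ⟨S₀, F, rfl, h'⟩
      · rw [h'] at hM; cases hM
      · rw [h'] at hM
        cases F <;> cases hM
        refine ⟨S₀ ++ [.forF (E.shift.plug N)], ?_, by simp [plugS_append, plugS, Frame.plug]⟩
        rw [List.append_assoc]
        exact .append_left _ .commFor
    · rcases plugS_var_shape S n with h' | ⟨S₀, F, rfl, h'⟩
      · rw [h'] at hM; cases hM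
      · rw [h'] at hM
        cases F <;> cases hM
        refine ⟨S₀ ++ [.iteF (E.plug M) (E.plug N)], ?_, by simp [plugS_append, plugS, Frame.plug]⟩
        rw [List.append_assoc]
        exact .append_left _ .commIte

theorem StackSN.csn_var {S : Stack} (h : StackSN S) (n : Nat) : CSN (plugS S (.var n)) := by
  induction h with
  | intro S _ ih =>
    refine ⟨_, fun P hP => ?_⟩
    obtain ⟨S', hS, rfl⟩ := plugS_var_step hP
    exact ih S' hS

/-! ### Reducible stacks terminate -/

theorem StackSN.nil : StackSN [] := ⟨_, fun _ h => by cases h⟩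

theorem StackSN.app {N : Tm} {S : Stack} (hN : CSN N) (hS : StackSN S) :
    StackSN (.appF N :: S) := by
  induction hN generalizing S with
  | intro N _ ihN =>
    have hS' := hS
    induction hS with
    | intro S hacc ihS =>
      refine ⟨_, fun T hT => ?_⟩
      cases hT with
      | head h =>
        cases h with
        | app h => exact ihN _ h hS'
      | tail h => exact ihS _ h (hacc _ h)

theorem StackSN.proj {l : String} {S : Stack} (hS : StackSN S) : StackSN (.projF l :: S) := by
  induction hS with
  | intro S _ ihS =>
    refine ⟨_, fun T hT => ?_⟩
    cases hT with
    | head h => cases h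
    | tail h => exact ihS _ h

theorem RedS.stackSN (A : Ty) (S : Stack) (h : RedS A S) : StackSN S := by
  match A, S, h with
  | _, [], _ => exact .nil
  | .base .bool, E :: S, h =>
    rw [RedS] at h
    · exact .of_csn h.1
    · simp
  | .base .int, E :: S, h => simp [RedS] at h
  | .base .string, E :: S, h => simp [RedS] at h
  | .bag B, E :: S, h =>
    rw [RedS] at h
    · exact .of_csn (h (.var 0) fun S' hS' => (RedS.stackSN B S' hS').csn_var 0)
    · simp
  | .fn A B, .appF N :: S, h =>
    rw [RedS] at h
    -- Plugging a reducible argument into `Id` shows that it is c-SN.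
    exact .app (h.2 [] (by simp [RedS])) (RedS.stackSN B S h.1)
  | .fn A B, .projF _ :: S, h | .fn A B, .iteF _ _ :: S, h | .fn A B, .forF _ :: S, h =>
    simp [RedS] at h
  | .record fts, .projF l :: S, h =>
    rw [RedS] at h
    obtain ⟨A, hA⟩ := h
    exact .proj (RedS.stackSN A.1 S hA)
  | .record fts, .appF _ :: S, h | .record fts, .iteF _ _ :: S, h | .record fts, .forF _ :: S, h =>
    simp [RedS] at h
termination_by sizeOf A
decreasing_by
  all_goals simp_wf
  all_goals first
    | omega
    | (have h1 := List.sizeOf_lt_of_mem A.2; simp at h1 ⊢; omega)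

end NRC

/-- Every variable x : A is reducible. -/
theorem variable_reducible (A : NRC.Ty) (n : Nat) : NRC.RedT A (.var n) :=
  fun S hS => (NRC.RedS.stackSN A S hS).csn_var n
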